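/- arXiv:math/0702864 — 2 statements merged into one kernel-verified Lean document; each statement's English description precedes it below -/
import Mathlib

section
/- For all positive integers n and k, the centralizer algebra End_{I*_k}(V^{⊗k}) — the set of all ℂ-linear endomorphisms of V^{⊗k} commuting with the action of every element of I*_k — equals the ℂ-linear span of the operators on V^{⊗k} given by the elements of the symmetric inverse semigroup IS_n (i.e., the image of the semigroup algebra ℂ[IS_n]). -/
/-!
Why the theorem is true. A rook matrix acts on basis tensors by relabelling the entries of a tuple
along a partial injection, and `I*_k` acts by moving entries between positions, so the two actions
commute; this is `tpow_commute`.

Conversely, let `A` commute with `I*_k`. Two tuples `i`, `i'` with the same set of values define an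
element `fiberDual i i'` of `I*_k` that sends `v_i` to `v_{i'}`. Commuting with `fiberDual i i`
and `fiberDual l l` forces `A l i = 0` unless `i` and `l` have the same kernel, that is, unless
`l = σ ∘ i` for some permutation `σ`. Commuting with `fiberDual i i'` shows that `A (σ ∘ i) i`
depends only on `σ` and on the set of values of `i`. Hence `A` is a combination of the matrices
`orbitMat S σ`, which send `v_i` to `v_{σ ∘ i}` if `i` has value set exactly `S` and to `0`
otherwise. Since the rook matrix of `σ` restricted to `S` acts as `∑ T ⊆ S, orbitMat T σ`,
induction on `S` puts every `orbitMat S σ` in the span of the operators of `IS_n`.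
-/

open scoped BigOperators

/-- A rook matrix: entries in {0,1}, with at most one nonzero entry in each row
and in each column. -/
def IsRook {n : ℕ} (M : Matrix (Fin n) (Fin n) ℂ) : Prop :=
  (∀ i j, M i j = 0 ∨ M i j = 1) ∧
  (∀ i j j', M i j ≠ 0 → M i j' ≠ 0 → j = j') ∧
  (∀ i i' j, M i j ≠ 0 → M i' j ≠ 0 → i = i')

/-- The symmetric inverse semigroup IS_n, realized as the monoid of n×n rook
matrices under matrix multiplication. -/
def RookMonoid (n : ℕ) := {M : Matrix (Fin n) (Fin n) ℂ // IsRook M}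

/-- The k-fold tensor (Kronecker) power of a matrix: the operator induced on the
k-th tensor power of the space with basis indexed by `m`, identified with the
space of functions `(Fin k → m) → ℂ` via the basis v_i = e_{i 0} ⊗ ⋯ ⊗ e_{i (k-1)}. -/
noncomputable def tpow (k : ℕ) {m : Type} [Fintype m] (M : Matrix m m ℂ) :
    Matrix (Fin k → m) (Fin k → m) ℂ :=
  Matrix.of fun l i => ∏ t : Fin k, M (l t) (i t)

/-- The dual symmetric inverse semigroup I*_k: partitions of
K̃ = {1,…,k} ⊔ {1',…,k'} (encoded as equivalence relations on `Fin k ⊕ Fin k`,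
with `Sum.inl` the unprimed and `Sum.inr` the primed elements), each of whose
blocks intersects both K and K'. -/
structure DualSym (k : ℕ) where
  rel : Fin k ⊕ Fin k → Fin k ⊕ Fin k → Prop
  refl : ∀ x, rel x x
  symm : ∀ {x y}, rel x y → rel y x
  trans : ∀ {x y z}, rel x y → rel y z → rel x z
  meetsL : ∀ x, ∃ a, rel x (Sum.inl a)
  meetsR : ∀ x, ∃ b, rel x (Sum.inr b)

open Classical in
/-- The operator on V^{⊗k} attached to α ∈ I*_k: the (l,i) entry is 1 iff the
labelling of K̃ given by i on K and l on K' is constant on the blocks of α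
(so that α(v_i) = v_l when such l exists, and α(v_i) = 0 otherwise). -/
noncomputable def dualOp (n k : ℕ) (α : DualSym k) :
    Matrix (Fin k → Fin n) (Fin k → Fin n) ℂ :=
  Matrix.of fun l i =>
    if ∀ x y, α.rel x y → Sum.elim i l x = Sum.elim i l y then 1 else 0

open Classical in
lemma tpow_rook_apply {n k : ℕ} {M : Matrix (Fin n) (Fin n) ℂ} (hM : IsRook M)
    (l i : Fin k → Fin n) :
    tpow k M l i = if ∀ t, M (l t) (i t) ≠ 0 then 1 else 0 := by
  simp only [tpow, Matrix.of_apply]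
  split_ifs with h
  · exact Finset.prod_eq_one fun t _ => (hM.1 _ _).resolve_left (h t)
  · push Not at h
    obtain ⟨t, ht⟩ := h
    exact Finset.prod_eq_zero (Finset.mem_univ t) ht

lemma sum_ite_subsingleton {ι : Type*} [Fintype ι] (P : ι → Prop) [DecidablePred P]
    [Decidable (∃ j, P j)]
    (h : ∀ a b, P a → P b → a = b) :
    (∑ j, if P j then (1 : ℂ) else 0) = if ∃ j, P j then 1 else 0 := by
  split_ifs with hP
  · obtain ⟨a, ha⟩ := hP
    rw [Finset.sum_eq_single a]
    · simp [ha]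
    · intro b _ hb
      rw [if_neg fun hPb => hb (h _ _ hPb ha)]
    · simp
  · push Not at hP
    exact Finset.sum_eq_zero fun j _ => if_neg (hP j)

/-- Both products have entry `1` or `0` at `(l, i)` according to whether an intermediate tuple
exists; an intermediate tuple for one order of composition is transported along the blocks of `α`
to one for the other order. -/
lemma tpow_commute {n k : ℕ} {M : Matrix (Fin n) (Fin n) ℂ} (hM : IsRook M) (α : DualSym k) :
    tpow k M * dualOp n k α = dualOp n k α * tpow k M := by
  classical
  ext l i
  simp only [Matrix.mul_apply, tpow_rook_apply hM, dualOp, Matrix.of_apply, ite_mul, one_mul,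
    zero_mul, ← ite_and]
  rw [sum_ite_subsingleton (ι := Fin k → Fin n), sum_ite_subsingleton (ι := Fin k → Fin n)]
  · congr 1
    refine propext ⟨?_, ?_⟩
    · rintro ⟨j, hj, hc⟩
      choose b hb using fun t : Fin k => α.meetsR (Sum.inl t)
      have hlab : ∀ t, M (l (b t)) (i t) ≠ 0 := fun t => by
        have := hc _ _ (hb t)
        simp only [Sum.elim_inl, Sum.elim_inr] at this
        rw [this]
        exact hj _
      refine ⟨fun t => l (b t), fun x y hxy => ?_, hlab⟩
      have key : ∀ x, M (Sum.elim (fun t => l (b t)) l x) (Sum.elim i j x) ≠ 0 := by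
        rintro (t | t)
        · exact hlab t
        · exact hj t
      refine hM.2.2 _ _ (Sum.elim i j x) (key x) ?_
      rw [hc x y hxy]
      exact key y
    · rintro ⟨j, hc, hj⟩
      choose b hb using fun t : Fin k => α.meetsL (Sum.inr t)
      have hlab : ∀ t, M (l t) (i (b t)) ≠ 0 := fun t => by
        have := hc _ _ (hb t)
        simp only [Sum.elim_inl, Sum.elim_inr] at this
        rw [this]
        exact hj _
      refine ⟨fun t => i (b t), hlab, fun x y hxy => ?_⟩
      have key : ∀ x, M (Sum.elim j l x) (Sum.elim i (fun t => i (b t)) x) ≠ 0 := by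
        rintro (t | t)
        · exact hj t
        · exact hlab t
      refine hM.2.1 (Sum.elim j l x) _ _ (key x) ?_
      rw [hc x y hxy]
      exact key y
  · rintro a b ⟨-, ha⟩ ⟨-, hb⟩
    exact funext fun t => hM.2.2 _ _ _ (ha t) (hb t)
  · rintro a b ⟨ha, -⟩ ⟨hb, -⟩
    exact funext fun t => hM.2.1 _ _ _ (ha t) (hb t)

/-- For tuples `i`, `i'` with the same set of values, the element of `I*_k` with one block for each
value `v`, consisting of the positions of `v` in `i` and the (primed) positions of `v` in `i'`. -/
def fiberDual {n k : ℕ} (i i' : Fin k → Fin n) (h : Set.range i = Set.range i') : DualSym k where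
  rel x y := Sum.elim i i' x = Sum.elim i i' y
  refl _ := rfl
  symm h := h.symm
  trans h h' := h.trans h'
  meetsL := by
    rintro (t | t)
    · exact ⟨t, rfl⟩
    · obtain ⟨a, ha⟩ : i' t ∈ Set.range i := h ▸ Set.mem_range_self t
      exact ⟨a, ha.symm⟩
  meetsR := by
    rintro (t | t)
    · obtain ⟨a, ha⟩ : i t ∈ Set.range i' := h ▸ Set.mem_range_self t
      exact ⟨a, ha.symm⟩
    · exact ⟨t, rfl⟩

open Classical in
lemma dualOp_fiberDual_right {n k : ℕ} (i i' : Fin k → Fin n) (h : Set.range i = Set.range i')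
    (j : Fin k → Fin n) : dualOp n k (fiberDual i i' h) j i = if j = i' then 1 else 0 := by
  simp only [dualOp, Matrix.of_apply]
  congr 1
  refine propext ⟨fun hc => funext fun t => ?_, ?_⟩
  · obtain ⟨a, ha⟩ : i' t ∈ Set.range i := h ▸ Set.mem_range_self t
    have := hc (Sum.inr t) (Sum.inl a) ha.symm
    exact this.trans ha
  · rintro rfl x y hxy
    exact hxy

open Classical in
lemma dualOp_fiberDual_left {n k : ℕ} (i i' : Fin k → Fin n) (h : Set.range i = Set.range i')
    (σ : Equiv.Perm (Fin n)) (j : Fin k → Fin n) :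
    dualOp n k (fiberDual i i' h) (σ ∘ i') j = if j = σ ∘ i then 1 else 0 := by
  simp only [dualOp, Matrix.of_apply]
  congr 1
  refine propext ⟨fun hc => funext fun t => ?_, ?_⟩
  · obtain ⟨a, ha⟩ : i t ∈ Set.range i' := h ▸ Set.mem_range_self t
    have := hc (Sum.inl t) (Sum.inr a) ha.symm
    exact this.trans (congrArg σ ha)
  · rintro rfl x y hxy
    rw [← Sum.comp_elim]
    exact congrArg σ hxy

lemma centralizer_invariant {n k : ℕ} {A : Matrix (Fin k → Fin n) (Fin k → Fin n) ℂ}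
    (hA : ∀ α : DualSym k, A * dualOp n k α = dualOp n k α * A)
    (i i' : Fin k → Fin n) (h : Set.range i = Set.range i')
    (σ : Equiv.Perm (Fin n)) : A (σ ∘ i') i' = A (σ ∘ i) i := by
  have := congrFun (congrFun (hA (fiberDual i i' h)) (σ ∘ i')) i
  simpa [Matrix.mul_apply, dualOp_fiberDual_right, dualOp_fiberDual_left] using this

lemma centralizer_ker {n k : ℕ} {A : Matrix (Fin k → Fin n) (Fin k → Fin n) ℂ}
    (hA : ∀ α : DualSym k, A * dualOp n k α = dualOp n k α * A)
    (l i : Fin k → Fin n) (hli : A l i ≠ 0) (a b : Fin k) :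
    i a = i b ↔ l a = l b := by
  constructor
  · intro hab
    have e := congrFun (congrFun (hA (fiberDual i i rfl)) l) i
    simp only [Matrix.mul_apply, dualOp_fiberDual_right, mul_ite, mul_one, mul_zero,
      Finset.sum_ite_eq', Finset.mem_univ, if_true] at e
    rw [e] at hli
    obtain ⟨j, -, hj⟩ := Finset.exists_ne_zero_of_sum_ne_zero hli
    have hD := left_ne_zero_of_mul hj
    simp only [dualOp, Matrix.of_apply, ne_eq, ite_eq_right_iff, one_ne_zero, imp_false,
      not_not] at hD
    exact hD (Sum.inr a) (Sum.inr b) hab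
  · intro hab
    have e := congrFun (congrFun (hA (fiberDual l l rfl)) l) i
    have hl : ∀ j, dualOp n k (fiberDual l l rfl) l j = if j = l then 1 else 0 :=
      dualOp_fiberDual_left l l rfl 1
    simp only [Matrix.mul_apply, hl, ite_mul, one_mul, zero_mul,
      Finset.sum_ite_eq', Finset.mem_univ, if_true] at e
    rw [← e] at hli
    obtain ⟨j, -, hj⟩ := Finset.exists_ne_zero_of_sum_ne_zero hli
    have hD := right_ne_zero_of_mul hj
    simp only [dualOp, Matrix.of_apply, ne_eq, ite_eq_right_iff, one_ne_zero, imp_false,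
      not_not] at hD
    exact hD (Sum.inl a) (Sum.inl b) hab

lemma exists_perm_of_ker {n k : ℕ} (l i : Fin k → Fin n)
    (h : ∀ a b, i a = i b ↔ l a = l b) : ∃ σ : Equiv.Perm (Fin n), l = σ ∘ i := by
  have hf : ∀ a, Function.extend i l id (i a) = l a := fun a =>
    Function.FactorsThrough.extend_apply (fun a b hab => (h a b).1 hab) id a
  obtain ⟨g, hg⟩ := Set.MapsTo.exists_equiv_extend_of_card_eq (α := Fin n)
    (t := (Finset.univ : Finset (Fin n))) (by simp) (s := Set.range i)
    (f := Function.extend i l id) (fun _ _ => by simp) (by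
      rintro _ ⟨a, rfl⟩ _ ⟨b, rfl⟩ hab
      rw [hf, hf] at hab
      exact (h a b).2 hab)
  refine ⟨g.trans (Equiv.subtypeUnivEquiv (by simp)), funext fun a => ?_⟩
  have := hg (i a) ⟨a, rfl⟩
  rw [hf] at this
  simpa using this.symm

/-- The operator sending `v_i` to `v_{σ ∘ i}` if the set of values of `i` is exactly `S`, and to `0`
otherwise. -/
def orbitMat {n : ℕ} (k : ℕ) (S : Finset (Fin n)) (σ : Equiv.Perm (Fin n)) :
    Matrix (Fin k → Fin n) (Fin k → Fin n) ℂ :=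
  Matrix.of fun l i => if Finset.univ.image i = S ∧ l = σ ∘ i then 1 else 0

/-- The rook matrix of the permutation `σ` restricted to the domain `S`. -/
def rookMat {n : ℕ} (S : Finset (Fin n)) (σ : Equiv.Perm (Fin n)) :
    Matrix (Fin n) (Fin n) ℂ :=
  Matrix.of fun a b => if b ∈ S ∧ a = σ b then 1 else 0

lemma rookMat_ne_zero {n : ℕ} (S : Finset (Fin n)) (σ : Equiv.Perm (Fin n)) (a b : Fin n) :
    rookMat S σ a b ≠ 0 ↔ b ∈ S ∧ a = σ b := by
  simp [rookMat]

lemma rookMat_isRook {n : ℕ} (S : Finset (Fin n)) (σ : Equiv.Perm (Fin n)) :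
    IsRook (rookMat S σ) := by
  refine ⟨fun a b => ?_, fun a b b' => ?_, fun a a' b => ?_⟩
  · simp only [rookMat, Matrix.of_apply]
    split_ifs <;> simp
  · rw [rookMat_ne_zero, rookMat_ne_zero]
    rintro ⟨-, h⟩ ⟨-, h'⟩
    exact σ.injective (h.symm.trans h')
  · rw [rookMat_ne_zero, rookMat_ne_zero]
    rintro ⟨-, h⟩ ⟨-, h'⟩
    exact h.trans h'.symm

lemma tpow_rookMat {n : ℕ} (k : ℕ) (S : Finset (Fin n)) (σ : Equiv.Perm (Fin n)) :
    tpow k (rookMat S σ) = ∑ T ∈ S.powerset, orbitMat k T σ := by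
  ext l i
  rw [tpow_rook_apply (rookMat_isRook S σ), Matrix.sum_apply]
  simp only [rookMat_ne_zero, orbitMat, Matrix.of_apply, ite_and, Finset.sum_ite_eq,
    Finset.mem_powerset]
  rw [← ite_and]
  congr 1
  simp only [forall_and, funext_iff, Function.comp_apply, Finset.image_subset_iff,
    Finset.mem_univ, true_implies]

lemma orbitMat_mem_span {n : ℕ} (k : ℕ) (σ : Equiv.Perm (Fin n)) (S : Finset (Fin n)) :
    orbitMat k S σ ∈
      Submodule.span ℂ (Set.range (fun σ : RookMonoid n => tpow k σ.val)) := by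
  induction S using Finset.strongInduction with
  | H S ih =>
    have h : orbitMat k S σ =
        tpow k (rookMat S σ) - ∑ T ∈ S.ssubsets, orbitMat k T σ := by
      rw [tpow_rookMat, eq_sub_iff_add_eq]
      exact Finset.add_sum_erase _ (fun T => orbitMat k T σ) (Finset.mem_powerset_self S)
    rw [h]
    refine Submodule.sub_mem _ (Submodule.subset_span ⟨⟨_, rookMat_isRook S σ⟩, rfl⟩)
      (Submodule.sum_mem _ fun T hT => ih T (Finset.mem_ssubsets.1 hT))

/-- A centralizing matrix is a combination of the `orbitMat S σ`. Different `σ` agreeing on `S` give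
the same matrix, so the coefficient is divided by the number of permutations agreeing with `σ` on
`S`. -/
lemma centralizer_mem_span {n k : ℕ} {A : Matrix (Fin k → Fin n) (Fin k → Fin n) ℂ}
    (hA : ∀ α : DualSym k, A * dualOp n k α = dualOp n k α * A) :
    A ∈ Submodule.span ℂ (Set.range (fun σ : RookMonoid n => tpow k σ.val)) := by
  classical
  have hc : ∀ (S : Finset (Fin n)) (σ : Equiv.Perm (Fin n)), ∃ c : ℂ,
      ∀ i : Fin k → Fin n, Finset.univ.image i = S → A (σ ∘ i) i = c := by
    intro S σ
    by_cases hS : ∃ i : Fin k → Fin n, Finset.univ.image i = S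
    · obtain ⟨i, rfl⟩ := hS
      refine ⟨A (σ ∘ i) i, fun i' h => centralizer_invariant hA i i' ?_ σ⟩
      simpa using (congrArg (fun s : Finset (Fin n) => (s : Set (Fin n))) h).symm
    · exact ⟨0, fun i hi => (hS ⟨i, hi⟩).elim⟩
  choose c hc using hc
  let m : Finset (Fin n) → Equiv.Perm (Fin n) → ℂ := fun S σ =>
    ((Finset.univ.filter fun τ : Equiv.Perm (Fin n) => ∀ x ∈ S, τ x = σ x).card : ℂ)
  have hsum : A = ∑ S : Finset (Fin n), ∑ σ : Equiv.Perm (Fin n),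
      (c S σ / m S σ) • orbitMat k S σ := by
    ext l i
    simp only [Matrix.sum_apply, Matrix.smul_apply, orbitMat, Matrix.of_apply, smul_eq_mul,
      ite_and, mul_ite, mul_one, mul_zero]
    rw [Finset.sum_comm]
    simp only [Finset.sum_ite_eq, Finset.mem_univ, if_true]
    set F := Finset.univ.filter fun τ : Equiv.Perm (Fin n) => l = τ ∘ i with hF
    have hm : ∀ σ : Equiv.Perm (Fin n), l = σ ∘ i → m (Finset.univ.image i) σ = F.card := by
      rintro σ rfl
      simp only [m, hF]
      congr 2
      ext τ
      simp [funext_iff, eq_comm]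
    rw [← Finset.sum_filter]
    have hconst : ∀ σ ∈ F, c (Finset.univ.image i) σ / m (Finset.univ.image i) σ
        = A l i / F.card := by
      intro σ hσ
      have hl := (Finset.mem_filter.1 hσ).2
      rw [hm σ hl, ← hc _ σ i rfl, ← hl]
    rw [Finset.sum_congr rfl hconst, Finset.sum_const, nsmul_eq_mul]
    by_cases h0 : A l i = 0
    · simp [h0]
    · obtain ⟨σ, hσ⟩ := exists_perm_of_ker l i (centralizer_ker hA l i h0)
      have : (F.card : ℂ) ≠ 0 := by
        rw [Nat.cast_ne_zero]
        exact Finset.card_ne_zero_of_mem (Finset.mem_filter.2 ⟨Finset.mem_univ σ, hσ⟩)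
      field_simp
  rw [hsum]
  exact Submodule.sum_mem _ fun S _ => Submodule.sum_mem _ fun σ _ =>
    Submodule.smul_mem _ _ (orbitMat_mem_span k σ S)

/-- Schur-Weyl duality, part (iii): the centralizer of the I*_k-action on V^{⊗k}
is exactly the linear span of the operators coming from IS_n. -/
theorem end_dualSym_eq_span_isn (n k : ℕ) (hn : 0 < n) (hk : 0 < k) :
    {A : Matrix (Fin k → Fin n) (Fin k → Fin n) ℂ |
        ∀ α : DualSym k, A * dualOp n k α = dualOp n k α * A} =
      (Submodule.span ℂ (Set.range (fun σ : RookMonoid n => tpow k σ.val)) : Set _) := by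
  refine Set.Subset.antisymm (fun A hA => centralizer_mem_span hA) fun A hA α => ?_
  induction hA using Submodule.span_induction with
  | mem x hx =>
    obtain ⟨σ, rfl⟩ := hx
    exact tpow_commute σ.2 α
  | zero => simp
  | add x y _ _ hx hy => rw [add_mul, mul_add, hx, hy]
  | smul a x _ hx => rw [smul_mul_assoc, mul_smul_comm, hx]
end

section
/- For all positive integers n and k, the diagonal action of the symmetric inverse semigroup IS_n on U^{⊗k} commutes with the action of the partial dual symmetric inverse semigroup PI*_k on U^{⊗k}: for every σ ∈ IS_n and every α ∈ PI*_k, the corresponding operators on U^{⊗k} commute. -/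
/-!
The operator of `σ ∈ IS_n` on `U` is the 0/1 matrix of a relation `R` on `{0} ∪ N` that is the
graph of a partial injection and relates `0` to `0` (`rookRel`). Hence the `(l, i)` entry of
either product is a sum of 0/1 terms with at most one nonzero term, and it is the indicator of
* `∃ j, R(l, j) ∧ pCond α i j` for the left-hand side,
* `∃ j, pCond α j l ∧ R(j, i)` for the right-hand side

(`R` taken coordinatewise). The two conditions are equivalent. If two labellings of `K ⊔ K'` are
related pointwise by `R`, then compatibility with `α` passes from one to the other
(`pCond_transfer`), and a labelling of one of the two sides extends to the other side because
every block of `α` meets both (`exists_left_of_right`, `exists_right_of_left`).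
-/

open scoped BigOperators

/-- The action of a rook matrix on U = V ⊕ ℂe₀: it acts by the matrix on V and
as the identity on the extra line ℂe₀ (indexed by `none`). -/
noncomputable def rookU (n : ℕ) (M : Matrix (Fin n) (Fin n) ℂ) :
    Matrix (Option (Fin n)) (Option (Fin n)) ℂ :=
  Matrix.of fun l i =>
    match l, i with
    | some a, some b => M a b
    | none, none => 1
    | _, _ => 0

/-- The partial dual symmetric inverse semigroup PI*_k: partitions of subsets of
K̃ = {1,…,k} ⊔ {1',…,k'} (encoded as partial equivalence relations on
`Fin k ⊕ Fin k`, with `Sum.inl` the unprimed and `Sum.inr` the primed elements),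
each of whose blocks intersects both K and K'. -/
structure PDualSym (k : ℕ) where
  rel : Fin k ⊕ Fin k → Fin k ⊕ Fin k → Prop
  symm : ∀ {x y}, rel x y → rel y x
  trans : ∀ {x y z}, rel x y → rel y z → rel x z
  meetsL : ∀ x, rel x x → ∃ a, rel x (Sum.inl a)
  meetsR : ∀ x, rel x x → ∃ b, rel x (Sum.inr b)

instance (k : ℕ) : Finite (PDualSym k) := by
  apply Finite.of_injective (fun α : PDualSym k => α.rel)
  intro a b h
  cases a; cases b; simpa using h

/-- The condition defining the ordinary action of α ∈ PI*_k on the distinguished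
basis of U^{⊗k} (basis vectors indexed by `Fin k → Option (Fin n)`, where `none`
encodes the extra index 0): α(v_i) = v_l iff the labelling of K̃ given by i on K
and l on K' is constant on the blocks of α and is 0 (=`none`) outside the domain
of α. -/
def pCond {n k : ℕ} (α : PDualSym k) (i l : Fin k → Option (Fin n)) : Prop :=
  (∀ x y, α.rel x y → Sum.elim i l x = Sum.elim i l y) ∧
  (∀ x, ¬ α.rel x x → Sum.elim i l x = none)

open Classical in
/-- The operator on U^{⊗k} attached to α ∈ PI*_k (ordinary action). -/
noncomputable def pOp (n k : ℕ) (α : PDualSym k) :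
    Matrix (Fin k → Option (Fin n)) (Fin k → Option (Fin n)) ℂ :=
  Matrix.of fun l i => if pCond α i l then 1 else 0

/-- The relation on `{0} ∪ N` given by the nonzero entries of the action of `M` on `U`. -/
def rookRel {n : ℕ} (M : Matrix (Fin n) (Fin n) ℂ) (x y : Option (Fin n)) : Prop :=
  rookU n M x y ≠ 0

lemma rookRel_none {n : ℕ} (M : Matrix (Fin n) (Fin n) ℂ) : rookRel M none none := by
  simp [rookRel, rookU]

lemma rookRel_left_unique {n : ℕ} {M : Matrix (Fin n) (Fin n) ℂ} (hM : IsRook M)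
    {x x' y : Option (Fin n)} (h : rookRel M x y) (h' : rookRel M x' y) : x = x' := by
  rcases x with _ | a <;> rcases x' with _ | a' <;> rcases y with _ | b <;>
    simp [rookRel, rookU] at h h' ⊢
  exact hM.2.2 a a' b h h'

lemma rookRel_right_unique {n : ℕ} {M : Matrix (Fin n) (Fin n) ℂ} (hM : IsRook M)
    {x y y' : Option (Fin n)} (h : rookRel M x y) (h' : rookRel M x y') : y = y' := by
  rcases y with _ | a <;> rcases y' with _ | a' <;> rcases x with _ | b <;>
    simp [rookRel, rookU] at h h' ⊢
  exact hM.2.1 b a a' h h'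

open Classical in
lemma rookU_eq_ite {n : ℕ} {M : Matrix (Fin n) (Fin n) ℂ} (hM : IsRook M)
    (x y : Option (Fin n)) : rookU n M x y = if rookRel M x y then 1 else 0 := by
  have h : rookU n M x y = 0 ∨ rookU n M x y = 1 := by
    rcases x with _ | a <;> rcases y with _ | b <;> simp [rookU]
    exact hM.1 a b
  rcases h with h | h <;> simp [rookRel, h]

open Classical in
lemma tpow_rookU_eq_ite {n : ℕ} (k : ℕ) {M : Matrix (Fin n) (Fin n) ℂ} (hM : IsRook M)
    (l i : Fin k → Option (Fin n)) :
    tpow k (rookU n M) l i = if ∀ t, rookRel M (l t) (i t) then 1 else 0 := by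
  simp only [tpow, Matrix.of_apply, rookU_eq_ite hM, Finset.prod_ite_zero, Finset.prod_const_one,
    Finset.mem_univ, true_imp_iff]

/-- Compatibility with `α` is transported along a relation that determines the new labels from
the old ones and relates the label `0` to itself. -/
lemma pCond_transfer {n k : ℕ} (α : PDualSym k) {R : Option (Fin n) → Option (Fin n) → Prop}
    (h0 : R none none) (hu : ∀ {x x' y}, R x y → R x' y → x = x')
    {i j m l : Fin k → Option (Fin n)} (hm : ∀ a, R (m a) (i a)) (hl : ∀ b, R (l b) (j b))
    (h : pCond α i j) : pCond α m l := by
  have hR : ∀ x, R (Sum.elim m l x) (Sum.elim i j x) := by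
    rintro (a | b)
    · exact hm a
    · exact hl b
  refine ⟨fun x y hxy => hu (hR x) ?_, fun x hx => hu (hR x) ?_⟩
  · rw [h.1 x y hxy]
    exact hR y
  · rw [h.2 x hx]
    exact h0

/-- A relabelling of the primed points extends to the unprimed ones: each unprimed point in the
domain of `α` copies the new label of a primed point of its block, all others get `0`. -/
lemma exists_left_of_right {n k : ℕ} (α : PDualSym k)
    {R : Option (Fin n) → Option (Fin n) → Prop} (h0 : R none none)
    (hu : ∀ {x x' y}, R x y → R x' y → x = x')
    {i j l : Fin k → Option (Fin n)} (hl : ∀ b, R (l b) (j b)) (h : pCond α i j) :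
    ∃ m, pCond α m l ∧ ∀ a, R (m a) (i a) := by
  have key : ∀ a, ∃ z, R z (i a) := by
    intro a
    by_cases ha : α.rel (Sum.inl a) (Sum.inl a)
    · obtain ⟨b, hb⟩ := α.meetsR _ ha
      have hij : i a = j b := h.1 _ _ hb
      exact ⟨l b, hij ▸ hl b⟩
    · have hi : i a = none := h.2 _ ha
      exact ⟨none, hi ▸ h0⟩
  choose m hm using key
  exact ⟨m, pCond_transfer α h0 hu hm hl h, hm⟩

/-- The mirror image of `exists_left_of_right`, with primed and unprimed points exchanged. -/
lemma exists_right_of_left {n k : ℕ} (α : PDualSym k)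
    {R : Option (Fin n) → Option (Fin n) → Prop} (h0 : R none none)
    (hu : ∀ {x x' y}, R x y → R x' y → x = x')
    {i j m : Fin k → Option (Fin n)} (hm : ∀ a, R (m a) (i a)) (h : pCond α i j) :
    ∃ l, pCond α m l ∧ ∀ b, R (l b) (j b) := by
  have key : ∀ b, ∃ z, R z (j b) := by
    intro b
    by_cases hb : α.rel (Sum.inr b) (Sum.inr b)
    · obtain ⟨a, ha⟩ := α.meetsL _ hb
      have hij : j b = i a := h.1 _ _ ha
      exact ⟨m a, hij ▸ hm a⟩
    · have hj : j b = none := h.2 _ hb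
      exact ⟨none, hj ▸ h0⟩
  choose l hl using key
  exact ⟨l, pCond_transfer α h0 hu hm hl h, hl⟩

lemma sum_ite_eq_ite_exists {ι : Type*} [Fintype ι] (p : ι → Prop) [DecidablePred p]
    [Decidable (∃ j, p j)]
    (hp : ∀ a b, p a → p b → a = b) :
    (∑ j, if p j then (1 : ℂ) else 0) = if ∃ j, p j then 1 else 0 := by
  by_cases h : ∃ j, p j
  · obtain ⟨j, hj⟩ := h
    rw [if_pos ⟨j, hj⟩, Finset.sum_eq_single j, if_pos hj]
    · exact fun b _ hb => if_neg fun hpb => hb (hp _ _ hpb hj)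
    · simp
  · rw [if_neg h]
    exact Finset.sum_eq_zero fun j _ => if_neg fun hj => h ⟨j, hj⟩

/-- Second Schur-Weyl duality, part (i): the diagonal action of IS_n on U^{⊗k}
commutes with the action of the partial dual symmetric inverse semigroup PI*_k. -/
theorem isn_pdualSym_actions_commute (n k : ℕ) (hn : 0 < n) (hk : 0 < k)
    (σ : RookMonoid n) (α : PDualSym k) :
    tpow k (rookU n σ.val) * pOp n k α = pOp n k α * tpow k (rookU n σ.val) := by
  classical
  obtain ⟨M, hM⟩ := σ
  ext l i
  have hL : (tpow k (rookU n M) * pOp n k α) l i =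
      if ∃ j, (∀ t, rookRel M (l t) (j t)) ∧ pCond α i j then 1 else 0 := by
    rw [Matrix.mul_apply]
    refine Eq.trans (Finset.sum_congr rfl fun j _ => ?_)
      (sum_ite_eq_ite_exists (fun j => (∀ t, rookRel M (l t) (j t)) ∧ pCond α i j) ?_)
    · simp only [tpow_rookU_eq_ite k hM, pOp, Matrix.of_apply, ite_and, ite_mul, one_mul, zero_mul]
    · exact fun a b ha hb => funext fun t => rookRel_right_unique hM (ha.1 t) (hb.1 t)
  have hR : (pOp n k α * tpow k (rookU n M)) l i =
      if ∃ j, pCond α j l ∧ ∀ t, rookRel M (j t) (i t) then 1 else 0 := by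
    rw [Matrix.mul_apply]
    refine Eq.trans (Finset.sum_congr rfl fun j _ => ?_)
      (sum_ite_eq_ite_exists (fun j => pCond α j l ∧ ∀ t, rookRel M (j t) (i t)) ?_)
    · simp only [tpow_rookU_eq_ite k hM, pOp, Matrix.of_apply, ite_and, ite_mul, one_mul, zero_mul]
    · exact fun a b ha hb => funext fun t => rookRel_left_unique hM (ha.2 t) (hb.2 t)
  refine hL.trans (Eq.trans ?_ hR.symm)
  refine if_congr ⟨?_, ?_⟩ rfl rfl
  · rintro ⟨j, hlj, hij⟩
    exact exists_left_of_right α (rookRel_none M) (rookRel_left_unique hM) hlj hij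
  · rintro ⟨j, hjl, hji⟩
    -- Here the labels move from `j` to `i`, so the converse relation is used.
    obtain ⟨m, him, hlm⟩ := exists_right_of_left α (R := fun x y => rookRel M y x)
      (rookRel_none M) (rookRel_right_unique hM) hji hjl
    exact ⟨m, hlm, him⟩
end
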